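/- arXiv:math/0407174 — 6 statements merged into one kernel-verified Lean document; each statement's English description precedes it below -/
import Mathlib

section
/- Let α be a totally real real number. Then the real number √(1 + α²) is totally real. -/
/-! A conjugate `z` of `β = √(1 + α²)` is the image of `β` under some embedding of the algebraic
numbers. The same embedding sends `α` to one of its conjugates `w`, which is real, and preserves
the relation between the two, so `z² = 1 + w² ≥ 0`; a complex number whose square is a nonnegative
real is real. -/

open Polynomial

/-- A complex number is *totally real* if it is algebraic over ℚ and every complex
root of its minimal polynomial over ℚ is a real number. -/
def IsTotallyReal (α : ℂ) : Prop :=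
  IsAlgebraic ℚ α ∧ ∀ z : ℂ, aeval z (minpoly ℚ α) = 0 → z.im = 0

theorem exists_aeval_minpoly_eq_zero_and_aeval_eq {F E L : Type*} [Field F] [Field E] [Field L]
    [Algebra F E] [Algebra F L] [IsAlgClosed L] {α β : E} (hα : IsAlgebraic F α)
    (hβ : IsAlgebraic F β) {p q : F[X]} (h : aeval β q = aeval α p) {z : L}
    (hz : aeval z (minpoly F β) = 0) :
    ∃ w : L, aeval w (minpoly F α) = 0 ∧ aeval z q = aeval w p := by
  lift α to algebraicClosure F E using mem_algebraicClosure_iff.2 hα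
  lift β to algebraicClosure F E using mem_algebraicClosure_iff.2 hβ
  rw [← IntermediateField.minpoly_eq] at hz ⊢
  obtain ⟨φ, rfl⟩ : ∃ φ : algebraicClosure F E →ₐ[F] L, φ β = z :=
    IntermediateField.exists_algHom_of_splits_of_aeval
      (fun x ↦ ⟨Algebra.IsIntegral.isIntegral x, IsAlgClosed.splits _⟩) hz
  have hrel : aeval β q = aeval α p := Subtype.ext (by simpa using h)
  exact ⟨φ α, by rw [aeval_algHom_apply, minpoly.aeval, map_zero],
    by rw [aeval_algHom_apply, hrel, aeval_algHom_apply]⟩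

open ComplexOrder in
theorem IsTotallyReal.of_sq_eq_aeval {α β : ℂ} (hα : IsAlgebraic ℚ α) {p : ℚ[X]}
    (hp : ∀ w : ℂ, aeval w (minpoly ℚ α) = 0 → 0 ≤ aeval w p) (h : β ^ 2 = aeval α p) :
    IsTotallyReal β := by
  have hpα : IsIntegral ℚ (aeval α p) :=
    adjoin_le_integralClosure hα.isIntegral (aeval_mem_adjoin_singleton ℚ α)
  have hβ : IsAlgebraic ℚ β := .of_pow two_pos (h ▸ hpα.isAlgebraic)
  refine ⟨hβ, fun z hz ↦ ?_⟩
  obtain ⟨w, hw, hzw⟩ : ∃ w : ℂ, aeval w (minpoly ℚ α) = 0 ∧ aeval z (X ^ 2 : ℚ[X]) = aeval w p :=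
    exists_aeval_minpoly_eq_zero_and_aeval_eq hα hβ (by rwa [aeval_X_pow]) hz
  rw [← Complex.sq_nonneg_iff, ← aeval_X_pow (R := ℚ), hzw]
  exact hp w hw

theorem totallyReal_sqrt_one_add_sq (α : ℝ) (hα : IsTotallyReal (α : ℂ)) :
    IsTotallyReal ((Real.sqrt (1 + α ^ 2) : ℝ) : ℂ) := by
  have aeval_ofReal (x : ℝ) : aeval (x : ℂ) (1 + X ^ 2 : ℚ[X]) = ((1 + x ^ 2 : ℝ) : ℂ) := by simp
  refine IsTotallyReal.of_sq_eq_aeval (p := 1 + X ^ 2) hα.1 (fun w hw ↦ ?_) ?_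
  · lift w to ℝ using hα.2 w hw
    rw [aeval_ofReal, Complex.zero_le_real]
    positivity
  · rw [aeval_ofReal, ← Complex.ofReal_pow, Real.sq_sqrt (by positivity)]
end

section
/- Let A be an n × n complex matrix whose characteristic polynomial is ∏_{i=1}^{n} (X − xᵢ) and let B be an m × m complex matrix whose characteristic polynomial is ∏_{j=1}^{m} (X − yⱼ). Then the characteristic polynomial of the Kronecker product A ⊗ B is ∏_{i=1}^{n} ∏_{j=1}^{m} (X − xᵢyⱼ). -/
/-!
Substituting `B` for `Y` in `Y • A` turns each entry `Y Aᵢⱼ` into the block `Aᵢⱼ B` of `A ⊗ B`, and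
these blocks commute. Silvester's formula `Matrix.det_det` therefore computes the characteristic
polynomial of `A ⊗ B` in two steps: factor that of `Y • A` over `R[Y]`, which is `∏ᵢ (X - xᵢ Y)`,
then replace each factor by the determinant of `X - xᵢ B`, that is, by the characteristic
polynomial `∏ⱼ (X - xᵢ yⱼ)` of `xᵢ • B`.
-/

open Polynomial Matrix Kronecker

section Scaling

variable {R n ι : Type*} [CommRing R] [Fintype n] [DecidableEq n]

theorem charpolyRev_smul (s : R) (M : Matrix n n R) :
    (s • M).charpolyRev = M.charpolyRev.comp (C s * X) := by
  rw [charpolyRev, charpolyRev, ← coe_compRingHom_apply, RingHom.map_det]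
  congr 1
  ext1 i j
  by_cases hij : i = j <;> simp [hij, X_mul, mul_assoc, mul_left_comm (C s)]

theorem charpoly_smul (s : R) (M : Matrix n n R) :
    (s • M).charpoly = M.charpoly.scaleRoots s := by
  nontriviality R
  have hrev : (s • M).charpoly.reverse = M.charpoly.reverse.comp (C s * X) := by
    simp only [reverse_charpoly, charpolyRev_smul]
  ext k
  rcases le_or_gt k (Fintype.card n) with hk | hk
  · have hcoeff := congrArg (coeff · (Fintype.card n - k)) hrev
    simpa [comp_C_mul_X_coeff, coeff_reverse, charpoly_natDegree_eq_dim, revAt_le,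
      Nat.sub_sub_self hk] using hcoeff
  · rw [coeff_eq_zero_of_natDegree_lt, coeff_eq_zero_of_natDegree_lt] <;>
      simpa only [natDegree_scaleRoots, charpoly_natDegree_eq_dim] using hk

theorem scaleRoots_prod_X_sub_C (t : Finset ι) (x : ι → R) (s : R) :
    (∏ i ∈ t, (X - C (x i))).scaleRoots s = ∏ i ∈ t, (X - C (x i * s)) := by
  classical
  nontriviality R
  induction t using Finset.induction_on with
  | empty => simp only [Finset.prod_empty, one_scaleRoots]
  | insert i t hi ih =>
    have hlead : (X - C (x i)).leadingCoeff * (∏ j ∈ t, (X - C (x j))).leadingCoeff ≠ 0 := by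
      rw [leadingCoeff_X_sub_C, (monic_prod_X_sub_C x t).leadingCoeff, mul_one]
      exact one_ne_zero
    rw [Finset.prod_insert hi, Finset.prod_insert hi, mul_scaleRoots' _ _ _ hlead,
      X_sub_C_scaleRoots, ih]

theorem charpoly_smul_of_charpoly_eq_prod [Fintype ι] {M : Matrix n n R} {x : ι → R}
    (hM : M.charpoly = ∏ i, (X - C (x i))) (s : R) :
    (s • M).charpoly = ∏ i, (X - C (x i * s)) := by
  rw [charpoly_smul, hM, scaleRoots_prod_X_sub_C]

end Scaling

section CommutingBlocks

variable {R S n m ι : Type*} [CommRing R] [CommRing S]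
  [Fintype n] [DecidableEq n] [Fintype m] [DecidableEq m] [Fintype ι]

theorem polyToMatrix_X_sub_C (f : S →+* Matrix m m R) (a : S) :
    f.polyToMatrix (X - C a) = (f a).charmatrix := by
  simp [RingHom.polyToMatrix, charmatrix]

theorem charmatrix_comp_map (f : S →+* Matrix m m R) (M : Matrix n n S) :
    ((M.map f).comp n n m m R).charmatrix =
      (M.charmatrix.map f.polyToMatrix).comp n n m m R[X] := by
  ext1 ⟨i, k⟩ ⟨j, l⟩
  by_cases hij : i = j <;> by_cases hkl : k = l <;>
    simp [hij, hkl, RingHom.polyToMatrix, Matrix.comp_apply]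

theorem charpoly_comp_map (f : S →+* Matrix m m R) (M : Matrix n n S) :
    ((M.map f).comp n n m m R).charpoly = (f.polyToMatrix M.charpoly).det := by
  rw [charpoly, charpoly, charmatrix_comp_map, det_det]

theorem charpoly_comp_map_of_charpoly_eq_prod (f : S →+* Matrix m m R) {M : Matrix n n S}
    {x : ι → S} (hM : M.charpoly = ∏ i, (X - C (x i))) :
    ((M.map f).comp n n m m R).charpoly = ∏ i, (f (x i)).charpoly := by
  -- `Matrix m m R[X]` is not commutative, so `map_prod` applies only to `det ∘ f.polyToMatrix`.
  let detPoly : S[X] →* R[X] := detMonoidHom.comp f.polyToMatrix.toMonoidHom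
  calc
    ((M.map f).comp n n m m R).charpoly = detPoly (∏ i, (X - C (x i))) := by
      rw [charpoly_comp_map, hM]; rfl
    _ = ∏ i, detPoly (X - C (x i)) := map_prod ..
    _ = ∏ i, (f (x i)).charpoly :=
      Finset.prod_congr rfl fun i _ => congrArg det (polyToMatrix_X_sub_C f (x i))

end CommutingBlocks

section Kronecker

variable {R n m ι κ : Type*} [CommRing R] [Fintype m] [DecidableEq m]

theorem comp_map_aeval_X_smul (A : Matrix n n R) (B : Matrix m m R) :
    (((X : R[X]) • A.map C).map (aeval B).toRingHom).comp n n m m R = A ⊗ₖ B := by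
  ext ⟨i, k⟩ ⟨j, l⟩
  simp [Matrix.comp_apply, ← Algebra.smul_def]

variable [Fintype n] [DecidableEq n] [Fintype ι] [Fintype κ]

theorem charpoly_kronecker_eq_prod_charpoly_smul {A : Matrix n n R} {x : ι → R}
    (hA : A.charpoly = ∏ i, (X - C (x i))) (B : Matrix m m R) :
    (A ⊗ₖ B).charpoly = ∏ i, (x i • B).charpoly := by
  have hAC : (A.map C).charpoly = ∏ i, (X - C (C (x i))) := by
    simp [charpoly_map, hA, Polynomial.map_prod]
  rw [← comp_map_aeval_X_smul,
    charpoly_comp_map_of_charpoly_eq_prod _ (charpoly_smul_of_charpoly_eq_prod hAC X)]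
  simp [← Algebra.smul_def]

theorem charpoly_kronecker_eq_general {A : Matrix n n R} {B : Matrix m m R} {x : ι → R} {y : κ → R}
    (hA : A.charpoly = ∏ i, (X - C (x i))) (hB : B.charpoly = ∏ j, (X - C (y j))) :
    (A ⊗ₖ B).charpoly = ∏ i, ∏ j, (X - C (x i * y j)) := by
  simp only [charpoly_kronecker_eq_prod_charpoly_smul hA, charpoly_smul_of_charpoly_eq_prod hB,
    mul_comm (x _)]

end Kronecker

theorem charpoly_kronecker_eq (n m : ℕ)
    (A : Matrix (Fin n) (Fin n) ℂ) (B : Matrix (Fin m) (Fin m) ℂ)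
    (x : Fin n → ℂ) (y : Fin m → ℂ)
    (hA : A.charpoly = ∏ i : Fin n, (X - C (x i)))
    (hB : B.charpoly = ∏ j : Fin m, (X - C (y j))) :
    (A ⊗ₖ B).charpoly = ∏ i : Fin n, ∏ j : Fin m, (X - C (x i * y j)) :=
  charpoly_kronecker_eq_general hA hB
end

section
/- Let A be an n × n complex matrix whose characteristic polynomial is ∏_{i=1}^{n} (X − xᵢ) and let B be an m × m complex matrix whose characteristic polynomial is ∏_{j=1}^{m} (X − yⱼ). Then the characteristic polynomial of the matrix A ⊗ Iₘ + Iₙ ⊗ B is ∏_{i=1}^{n} ∏_{j=1}^{m} (X − xᵢ − yⱼ). -/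
open Polynomial Matrix Kronecker

/-!
The characteristic matrix of `A ⊗ Iₘ + Iₙ ⊗ B` is the block matrix with blocks
`δᵢⱼ (X Iₘ - B) - Aᵢⱼ Iₘ`, which is the characteristic matrix of `A` with the matrix `X Iₘ - B`
substituted for the variable. All blocks are polynomials in `X Iₘ - B`, hence commute, so the
determinant of the whole is the determinant of `χ_A (X Iₘ - B) = ∏ᵢ ((X - xᵢ) Iₘ - B)`, and the
`i`-th factor has determinant `χ_B (X - xᵢ) = ∏ⱼ (X - xᵢ - yⱼ)`.
-/

section KroneckerSum

variable {R S : Type*} [CommRing R] [CommRing S] [Algebra R S]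
variable {m n : Type*} [Fintype m] [DecidableEq m] [Fintype n] [DecidableEq n]

theorem det_aeval_prod_X_sub_C {ι : Type*} (s : Finset ι) (M : Matrix m m S) (x : ι → R) :
    (aeval M (∏ i ∈ s, (X - C (x i)))).det =
      ∏ i ∈ s, (M - algebraMap R (Matrix m m S) (x i)).det := by
  -- Matrices do not form a commutative monoid, so `map_prod` needs the composite `det ∘ aeval M`.
  let detAeval : R[X] →* S := detMonoidHom.comp (aeval (R := R) M).toRingHom.toMonoidHom
  calc
    (aeval M (∏ i ∈ s, (X - C (x i)))).det = ∏ i ∈ s, (aeval M (X - C (x i))).det :=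
      map_prod detAeval _ _
    _ = ∏ i ∈ s, (M - algebraMap R (Matrix m m S) (x i)).det := by
      simp only [map_sub, aeval_X, aeval_C]

theorem det_charmatrix_sub_algebraMap (B : Matrix m m R) (a : R) :
    (B.charmatrix - algebraMap R (Matrix m m R[X]) a).det = B.charpoly.comp (X - C a) := by
  have hshift : B.charmatrix - algebraMap R (Matrix m m R[X]) a =
      (B - scalar m (-a)).charmatrix := by
    ext1 i j
    by_cases hij : i = j <;>
      simp [hij, algebraMap_matrix_apply, sub_sub]
  rw [hshift, ← charpoly, charpoly_sub_scalar, C_neg, sub_eq_add_neg]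

theorem comp_map_aeval_charmatrix {T : Type*} [Ring T] [Algebra R T]
    (A : Matrix n n R) (M : Matrix m m T) :
    comp n n m m T (A.charmatrix.map (aeval M)) =
      (1 : Matrix n n T) ⊗ₖ M - A.map (algebraMap R T) ⊗ₖ (1 : Matrix m m T) := by
  ext ⟨i, k⟩ ⟨j, l⟩
  by_cases hij : i = j <;> by_cases hkl : k = l <;>
    simp [hij, hkl, algebraMap_matrix_apply]

theorem charmatrix_kroneckerSum (A : Matrix n n R) (B : Matrix m m R) :
    (A ⊗ₖ (1 : Matrix m m R) + (1 : Matrix n n R) ⊗ₖ B).charmatrix =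
      (1 : Matrix n n R[X]) ⊗ₖ B.charmatrix - A.map C ⊗ₖ (1 : Matrix m m R[X]) := by
  ext1 ⟨i, k⟩ ⟨j, l⟩
  by_cases hij : i = j <;> by_cases hkl : k = l <;>
    simp [hij, hkl, sub_sub, add_comm]

theorem det_one_kronecker_sub_kronecker_one (A : Matrix n n R) (M : Matrix m m S) :
    ((1 : Matrix n n S) ⊗ₖ M - A.map (algebraMap R S) ⊗ₖ (1 : Matrix m m S)).det =
      (aeval M A.charpoly).det := by
  rw [← comp_map_aeval_charmatrix]
  exact (det_det A.charmatrix (aeval (R := R) M).toRingHom).symm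

theorem charpoly_kroneckerSum (A : Matrix n n R) (B : Matrix m m R) :
    (A ⊗ₖ (1 : Matrix m m R) + (1 : Matrix n n R) ⊗ₖ B).charpoly =
      (aeval B.charmatrix A.charpoly).det := by
  rw [charpoly, charmatrix_kroneckerSum]
  exact det_one_kronecker_sub_kronecker_one A B.charmatrix

theorem charpoly_kroneckerSum_eq_prod_comp {ι : Type*} [Fintype ι]
    (A : Matrix n n R) (B : Matrix m m R) (x : ι → R) (hA : A.charpoly = ∏ i, (X - C (x i))) :
    (A ⊗ₖ (1 : Matrix m m R) + (1 : Matrix n n R) ⊗ₖ B).charpoly =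
      ∏ i, B.charpoly.comp (X - C (x i)) := by
  simp only [charpoly_kroneckerSum, hA, det_aeval_prod_X_sub_C, det_charmatrix_sub_algebraMap]

theorem charpoly_kroneckerSum_eq_general {ι κ : Type*} [Fintype ι] [Fintype κ]
    (A : Matrix n n R) (B : Matrix m m R) (x : ι → R) (y : κ → R)
    (hA : A.charpoly = ∏ i, (X - C (x i))) (hB : B.charpoly = ∏ j, (X - C (y j))) :
    (A ⊗ₖ (1 : Matrix m m R) + (1 : Matrix n n R) ⊗ₖ B).charpoly =
      ∏ i, ∏ j, (X - C (x i) - C (y j)) := by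
  simp only [charpoly_kroneckerSum_eq_prod_comp A B x hA, hB, Polynomial.prod_comp, sub_comp,
    X_comp, C_comp]

end KroneckerSum

theorem charpoly_kroneckerSum_eq (n m : ℕ)
    (A : Matrix (Fin n) (Fin n) ℂ) (B : Matrix (Fin m) (Fin m) ℂ)
    (x : Fin n → ℂ) (y : Fin m → ℂ)
    (hA : A.charpoly = ∏ i : Fin n, (X - C (x i)))
    (hB : B.charpoly = ∏ j : Fin m, (X - C (y j))) :
    (A ⊗ₖ (1 : Matrix (Fin m) (Fin m) ℂ) + (1 : Matrix (Fin n) (Fin n) ℂ) ⊗ₖ B).charpoly =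
      ∏ i : Fin n, ∏ j : Fin m, (X - C (x i) - C (y j)) :=
  charpoly_kroneckerSum_eq_general A B x y hA hB
end

section
/- Every element of F_{√(1+x²)} is totally real, i.e. if α is a real number lying in every subfield K of ℝ with the property that √(1+x²) ∈ K for all x ∈ K, then α is algebraic over ℚ and every complex root of the minimal polynomial of α over ℚ is real. -/
/-!
The totally real numbers form a subfield of `ℂ`: an algebraic number is totally real exactly when
every embedding of the field of algebraic numbers into `ℂ` sends it into `ℝ`. A complex number is
real if and only if its square is a nonnegative real, and sums of nonnegative reals are nonnegative,
so a square root of a sum of two squares of totally real numbers is totally real. The totally real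
elements of `ℝ` therefore form a subfield closed under `x ↦ √(1+x²)`.
-/

open Polynomial

/-- Membership in `F_{√(1+x²)}`, the smallest subfield of ℝ closed under
`x ↦ √(1+x²)`. -/
def MemFSqrtOneAddSq (α : ℝ) : Prop :=
  ∀ K : Subfield ℝ, (∀ x ∈ K, Real.sqrt (1 + x ^ 2) ∈ K) → α ∈ K

/-- Membership in `F_{√x}`, the smallest subfield of ℂ closed under taking
square roots. -/
def MemFSqrt (α : ℂ) : Prop :=
  ∀ L : Subfield ℂ, (∀ z : ℂ, z ^ 2 ∈ L → z ∈ L) → α ∈ L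

open scoped ComplexOrder
open NumberField (maximalRealSubfield mem_maximalRealSubfield_iff)

section MaximalRealSubfield

variable {K : Type*} [Field K]

theorem mem_maximalRealSubfield_iff_im_eq_zero {x : K} :
    x ∈ maximalRealSubfield K ↔ ∀ φ : K →+* ℂ, (φ x).im = 0 := by
  simp only [mem_maximalRealSubfield_iff, RCLike.star_def, Complex.conj_eq_iff_im]

theorem mem_maximalRealSubfield_iff_sq_nonneg {x : K} :
    x ∈ maximalRealSubfield K ↔ ∀ φ : K →+* ℂ, 0 ≤ φ (x ^ 2) := by
  simp only [mem_maximalRealSubfield_iff_im_eq_zero, map_pow, Complex.sq_nonneg_iff]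

theorem mem_maximalRealSubfield_of_sq_eq_add_sq {x y z : K} (hx : x ∈ maximalRealSubfield K)
    (hy : y ∈ maximalRealSubfield K) (h : z ^ 2 = x ^ 2 + y ^ 2) :
    z ∈ maximalRealSubfield K := by
  rw [mem_maximalRealSubfield_iff_sq_nonneg] at hx hy ⊢
  intro φ
  rw [h, map_add]
  exact add_nonneg (hx φ) (hy φ)

theorem isTotallyReal_algebraMap_iff [Algebra ℚ K] [Algebra.IsAlgebraic ℚ K] [Algebra K ℂ]
    {x : K} : IsTotallyReal (algebraMap K ℂ x) ↔ x ∈ maximalRealSubfield K := by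
  have hx : IsAlgebraic ℚ x := Algebra.IsAlgebraic.isAlgebraic x
  have mem_rootSet (z : ℂ) : aeval z (minpoly ℚ x) = 0 ↔ z ∈ (minpoly ℚ x).rootSet ℂ :=
    (mem_rootSet_of_ne (minpoly.ne_zero hx.isIntegral)).symm
  rw [mem_maximalRealSubfield_iff_im_eq_zero, IsTotallyReal, and_iff_right hx.algebraMap,
    minpoly.algebraMap_eq (algebraMap K ℂ).injective]
  simp only [mem_rootSet, ← Algebra.IsAlgebraic.range_eval_eq_rootSet_minpoly, Set.forall_mem_range]
  exact (RingHom.equivRatAlgHom K ℂ).symm.forall_congr fun _ => Iff.rfl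

end MaximalRealSubfield

/-- The field of all totally real numbers, as a subfield of `ℂ`. It is built inside the field of
algebraic numbers, where being totally real is a condition on embeddings. -/
noncomputable def totallyRealNumbers : Subfield ℂ :=
  (maximalRealSubfield (algebraicClosure ℚ ℂ)).map (algebraMap (algebraicClosure ℚ ℂ) ℂ)

-- The `ℚ`-algebra structure inferred here is `DivisionRing.toRatAlgebra`, which agrees with that
-- of `algebraicClosure.isAlgebraic` only after unfolding.
instance : Algebra.IsAlgebraic ℚ (algebraicClosure ℚ ℂ) := algebraicClosure.isAlgebraic ℚ ℂ

theorem mem_totallyRealNumbers_iff {z : ℂ} : z ∈ totallyRealNumbers ↔ IsTotallyReal z := by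
  simp only [totallyRealNumbers, Subfield.mem_map]
  constructor
  · rintro ⟨a, ha, rfl⟩
    exact isTotallyReal_algebraMap_iff.mpr ha
  · intro hz
    exact ⟨⟨z, mem_algebraicClosure_iff.mpr hz.1⟩, isTotallyReal_algebraMap_iff.mp hz, rfl⟩

theorem IsTotallyReal.of_sq_eq_add_sq {x y z : ℂ} (hx : IsTotallyReal x) (hy : IsTotallyReal y)
    (h : z ^ 2 = x ^ 2 + y ^ 2) : IsTotallyReal z := by
  have hz : IsAlgebraic ℚ z :=
    IsAlgebraic.of_pow two_pos (h ▸ (hx.1.pow 2).add (hy.1.pow 2))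
  lift x to algebraicClosure ℚ ℂ using mem_algebraicClosure_iff.mpr hx.1
  lift y to algebraicClosure ℚ ℂ using mem_algebraicClosure_iff.mpr hy.1
  lift z to algebraicClosure ℚ ℂ using mem_algebraicClosure_iff.mpr hz
  have h' : z ^ 2 = x ^ 2 + y ^ 2 := Subtype.ext h
  exact isTotallyReal_algebraMap_iff.mpr <| mem_maximalRealSubfield_of_sq_eq_add_sq
    (isTotallyReal_algebraMap_iff.mp hx) (isTotallyReal_algebraMap_iff.mp hy) h'

theorem memFSqrtOneAddSq_totallyReal (α : ℝ) (h : MemFSqrtOneAddSq α) :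
    IsTotallyReal (α : ℂ) := by
  refine mem_totallyRealNumbers_iff.mp <|
    h (totallyRealNumbers.comap Complex.ofRealHom) fun x hx => ?_
  have one : IsTotallyReal 1 := mem_totallyRealNumbers_iff.mp totallyRealNumbers.one_mem
  have sqrt_sq : ((√(1 + x ^ 2) : ℝ) : ℂ) ^ 2 = 1 ^ 2 + (x : ℂ) ^ 2 := by
    rw [← Complex.ofReal_pow, Real.sq_sqrt (by positivity)]
    push_cast
    ring
  exact mem_totallyRealNumbers_iff.mpr <|
    one.of_sq_eq_add_sq (mem_totallyRealNumbers_iff.mp hx) sqrt_sq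
end

section
/- Every totally real element of F_{√x} lies in F_{√(1+x²)}: if α is a real number that lies in every subfield L of ℂ closed under taking square roots, and α is totally real, then α lies in every subfield K of ℝ with the property that √(1+x²) ∈ K for all x ∈ K. -/
/-!
A subfield of `ℝ` closed under `x ↦ √(1 + x²)` is Pythagorean, and a Pythagorean field `K` has
square roots of totally nonnegative elements: if all conjugates of `x` are real and nonpositive,
then its minimal polynomial has nonnegative coefficients, and splitting the relation `q(x) = 0`
into even and odd powers of `x` gives `s + x * t = 0` with `s` and `t` sums of squares, so that
`-x = s / t` is a sum of squares.

Let `N` be a finite Galois `2`-extension of `ℚ` inside `ℝ`. If `N` were not contained in `K`, then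
the nontrivial `2`-extension `N` of `N ∩ K` would contain some `y ∉ K` with `y² ∈ K`. The conjugates
of `-y²` have the form `-(σ y)² ≤ 0`, so `y²` is a square in `K`, a contradiction.

It remains to see that the minimal polynomial of a member of `F_{√x}` has a `2`-group as Galois
group. The algebraic numbers `x` such that each automorphism `σ` has a power `σ ^ 2 ^ n` fixing `x`
form a field; it is closed under square roots because an automorphism fixing `x²` maps `x` to `±x`.
-/

open Polynomial

theorem isSumSq_map {R S : Type*} [NonAssocSemiring R] [NonAssocSemiring S] (f : R →+* S) {s : R}
    (hs : IsSumSq s) : IsSumSq (f s) := by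
  induction hs with
  | zero => simp
  | sq_add a _ ih => simpa using ih.sq_add (f a)

theorem isSumSq_div {L : Type*} [Field L] {s t : L} (hs : IsSumSq s) (ht : IsSumSq t) :
    IsSumSq (s / t) := by
  rcases eq_or_ne t 0 with rfl | ht0
  · simp
  · rw [show s / t = s * t * (t⁻¹ * t⁻¹) by field_simp]
    exact (hs.mul ht).mul (.mul_self _)

theorem isSumSq_rat_of_nonneg {q : ℚ} (hq : 0 ≤ q) : IsSumSq q := by
  lift q to ℚ≥0 using hq
  rw [← NNRat.num_div_den q]
  push_cast
  exact isSumSq_div (.natCast _) (.natCast _)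

theorem coeff_nonneg_of_roots_nonpos {R : Type*} [CommRing R] [LinearOrder R]
    [IsStrictOrderedRing R] {q : R[X]} (hq : q.Splits) (hmonic : q.Monic)
    (hroots : ∀ r ∈ q.roots, r ≤ 0) (i : ℕ) : 0 ≤ q.coeff i := by
  rw [hq.eq_prod_roots_of_monic hmonic]
  refine Multiset.prod_induction (fun f : R[X] ↦ ∀ i, 0 ≤ f.coeff i) _ ?_ ?_ ?_ i
  · intro f g hf hg i
    rw [coeff_mul]
    exact Finset.sum_nonneg fun j _ ↦ mul_nonneg (hf _) (hg _)
  · intro i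
    rw [coeff_one]
    split_ifs <;> simp
  · intro f hf i
    obtain ⟨r, hr, rfl⟩ := Multiset.mem_map.1 hf
    rw [coeff_sub, coeff_X, coeff_C]
    have := hroots r hr
    split_ifs <;> grind

theorem exists_isSumSq_aeval_eq {F L : Type*} [CommSemiring F] [CommRing L] [Algebra F L]
    (x : L) {q : F[X]} (hq : ∀ i, IsSumSq (q.coeff i)) :
    ∃ s t : L, IsSumSq s ∧ IsSumSq t ∧ aeval x q = s + x * t ∧ aeval (-x) q = s - x * t := by
  induction q using recOnHorner with
  | M0 => exact ⟨0, 0, .zero, .zero, by simp, by simp⟩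
  | MC q a hq0 _ ih =>
    obtain ⟨s, t, hs, ht, hpos, hneg⟩ := ih fun i ↦ by
      rcases i with _ | i
      · simp [hq0]
      · simpa using hq (i + 1)
    have ha : IsSumSq a := by simpa [hq0] using hq 0
    refine ⟨s + algebraMap F L a, t, hs.add (isSumSq_map _ ha), ht, ?_, ?_⟩ <;>
      simp only [map_add, aeval_C, hpos, hneg] <;> ring
  | MX q _ ih =>
    obtain ⟨s, t, hs, ht, hpos, hneg⟩ := ih fun i ↦ by simpa using hq (i + 1)
    refine ⟨x * x * t, s, (IsSumSq.mul_self x).mul ht, hs, ?_, ?_⟩ <;>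
      simp only [map_mul, aeval_X, hpos, hneg] <;> ring

section OrderedExtension

variable {F R L : Type*} [Field F] [Field R] [LinearOrder R] [IsStrictOrderedRing R] [Algebra F R]
  [Field L] [Algebra F L]

theorem eq_zero_of_aeval_neg_minpoly {x : L} (hx : IsIntegral F x)
    (hsplits : ((minpoly F x).map (algebraMap F R)).Splits)
    (hroots : ∀ r : R, aeval r (minpoly F x) = 0 → r ≤ 0)
    (hneg : aeval (-x) (minpoly F x) = 0) : x = 0 := by
  obtain ⟨r, hr⟩ := hsplits.exists_eval_eq_zero
    (by simpa using (minpoly.degree_pos hx).ne')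
  rw [eval_map_algebraMap] at hr
  have hdvd : minpoly F x ∣ (minpoly F x).comp (-X) := minpoly.dvd F x (by simpa [aeval_comp])
  have hr' : aeval (-r) (minpoly F x) = 0 := by
    simpa [aeval_comp] using aeval_eq_zero_of_dvd_aeval_eq_zero hdvd hr
  have hr0 : r = 0 := le_antisymm (hroots r hr) (neg_nonpos.1 (hroots _ hr'))
  rw [hr0, ← coeff_zero_eq_aeval_zero', map_eq_zero] at hr
  exact (minpoly.coeff_zero_eq_zero hx).1 hr

theorem isSumSq_neg_of_roots_minpoly_nonpos
    (hF : ∀ a : F, 0 ≤ algebraMap F R a → IsSumSq a) {x : L} (hx : IsIntegral F x)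
    (hsplits : ((minpoly F x).map (algebraMap F R)).Splits)
    (hroots : ∀ r : R, aeval r (minpoly F x) = 0 → r ≤ 0) : IsSumSq (-x) := by
  have hmonic := (minpoly.monic hx).map (algebraMap F R)
  have hcoeff (i : ℕ) : IsSumSq ((minpoly F x).coeff i) := hF _ <| by
    rw [← coeff_map]
    refine coeff_nonneg_of_roots_nonpos hsplits hmonic (fun r hr ↦ hroots r ?_) i
    rwa [mem_roots hmonic.ne_zero, IsRoot, eval_map_algebraMap] at hr
  obtain ⟨s, t, hs, ht, hpos, hneg⟩ := exists_isSumSq_aeval_eq x hcoeff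
  rw [minpoly.aeval] at hpos
  rcases eq_or_ne t 0 with rfl | ht0
  · have hx0 : x = 0 := eq_zero_of_aeval_neg_minpoly hx hsplits hroots (by grind)
    simp [hx0]
  · rw [show -x = s / t by grind]
    exact isSumSq_div hs ht

theorem nonpos_of_aeval_minpoly_neg_sq_eq_zero [Algebra.IsIntegral F L]
    (hsplits : ∀ x : L, ((minpoly F x).map (algebraMap F R)).Splits) (y : L) {r : R}
    (hr : aeval r (minpoly F (-y ^ 2)) = 0) : r ≤ 0 := by
  obtain ⟨φ, rfl⟩ := IntermediateField.exists_algHom_of_splits_of_aeval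
    (fun x : L ↦ ⟨Algebra.IsIntegral.isIntegral x, hsplits x⟩) hr
  rw [map_neg, map_pow]
  exact neg_nonpos.2 (sq_nonneg _)

theorem isSumSq_of_algebraMap_eq_sq {M : Type*} [Field M] [Algebra F M] [Algebra M L]
    [IsScalarTower F M L] [Algebra.IsIntegral F L]
    (hF : ∀ a : F, 0 ≤ algebraMap F R a → IsSumSq a)
    (hsplits : ∀ x : L, ((minpoly F x).map (algebraMap F R)).Splits) {c : M} {y : L}
    (hc : algebraMap M L c = y ^ 2) : IsSumSq c := by
  have hminpoly : minpoly F (-c) = minpoly F (-y ^ 2) := by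
    rw [← hc, ← map_neg, minpoly.algebraMap_eq (algebraMap M L).injective]
  have hint : IsIntegral F (-c) :=
    (isIntegral_algebraMap_iff (algebraMap M L).injective).1 (Algebra.IsIntegral.isIntegral _)
  exact neg_neg c ▸ isSumSq_neg_of_roots_minpoly_nonpos hF hint (hminpoly ▸ hsplits _)
    fun r hr ↦ nonpos_of_aeval_minpoly_neg_sq_eq_zero hsplits y (hminpoly ▸ hr)

end OrderedExtension

/-- A *Pythagorean* ring: every sum of squares is a square. For subfields of `ℝ` this is what
closure under `x ↦ √(1 + x²)` provides. -/
def IsPythagorean (R : Type*) [Mul R] [Add R] [Zero R] : Prop :=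
  ∀ x : R, IsSumSq x → IsSquare x

theorem isPythagorean_of_sqrt_one_add_sq_mem {K : Subfield ℝ}
    (hK : ∀ x ∈ K, √(1 + x ^ 2) ∈ K) : IsPythagorean K := by
  intro x hx
  induction hx with
  | zero => exact .zero
  | sq_add a _ ih =>
    obtain ⟨b, rfl⟩ := ih
    rcases eq_or_ne a 0 with rfl | ha
    · exact ⟨b, by ring⟩
    · let c : K := ⟨√(1 + (b / a : K) ^ 2), hK _ (b / a).2⟩
      have hc : c * c = 1 + (b / a) ^ 2 := Subtype.ext (Real.mul_self_sqrt (by positivity))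
      exact ⟨a * c, by rw [mul_mul_mul_comm, hc]; field_simp⟩

open IntermediateField Module

section TwoExtensions

variable {M N : Type*} [Field M] [Field N] [Algebra M N]

theorem exists_sq_mem_range_of_isQuadraticExtension [Algebra.IsQuadraticExtension M N]
    [Algebra.IsSeparable M N] (h2 : (2 : M) ≠ 0) :
    ∃ y : N, y ∉ Set.range (algebraMap M N) ∧ y ^ 2 ∈ Set.range (algebraMap M N) := by
  have hrank : finrank M N = 2 := Algebra.IsQuadraticExtension.finrank_eq_two M N
  have hprim : IsPrimitiveRoot (-1 : M) 2 := .neg_one (ringChar M) fun h ↦ h2 <| by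
    simpa [h] using CharP.cast_eq_zero M (ringChar M)
  obtain ⟨y, hy, htop⟩ := exists_root_adjoin_eq_top_of_isCyclic M N
    (hrank ▸ ⟨-1, (mem_primitiveRoots two_pos).2 hprim⟩)
  rw [hrank] at hy
  refine ⟨y, fun hy_range ↦ ?_, hy⟩
  have hbot : (⊥ : IntermediateField M N) = ⊤ :=
    htop ▸ (adjoin_simple_eq_bot_iff.2 (mem_bot.2 hy_range)).symm
  rw [← finrank_top', ← hbot, IntermediateField.finrank_bot] at hrank
  omega

theorem exists_finrank_eq_of_isPGroup_gal {p : ℕ} [Fact p.Prime] [FiniteDimensional M N]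
    [IsGalois M N] (hp : IsPGroup p Gal(N/M)) (hrank : finrank M N ≠ 1) :
    ∃ F : IntermediateField M N, finrank M F = p := by
  obtain ⟨n, hn⟩ := IsPGroup.iff_card.1 hp
  rcases n with _ | n
  · exact absurd (by rw [← IsGalois.card_aut_eq_finrank, hn, pow_zero]) hrank
  obtain ⟨H, hH⟩ := Sylow.exists_subgroup_card_pow_prime p (hn ▸ pow_dvd_pow p n.le_succ)
  refine ⟨fixedField H, Nat.eq_of_mul_eq_mul_right (pow_pos (Fact.out : p.Prime).pos n) ?_⟩
  rw [← hH, ← finrank_fixedField_eq_card H, finrank_mul_finrank, finrank_fixedField_eq_card, hH,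
    ← IsGalois.card_aut_eq_finrank, hn, pow_succ']

theorem exists_sq_mem_range_of_isPGroup_gal [FiniteDimensional M N] [IsGalois M N]
    (h2 : (2 : M) ≠ 0) (hp : IsPGroup 2 Gal(N/M)) (hrank : finrank M N ≠ 1) :
    ∃ y : N, y ∉ Set.range (algebraMap M N) ∧ y ^ 2 ∈ Set.range (algebraMap M N) := by
  obtain ⟨F, hF⟩ := exists_finrank_eq_of_isPGroup_gal hp hrank
  have : Algebra.IsQuadraticExtension M F := ⟨hF⟩
  obtain ⟨y, hy, c, hc⟩ := exists_sq_mem_range_of_isQuadraticExtension (N := F) h2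
  exact ⟨y, fun ⟨a, ha⟩ ↦ hy ⟨a, Subtype.ext ha⟩, c, congrArg Subtype.val hc⟩

end TwoExtensions

section PythagoreanExtension

variable {F R : Type*} [Field F] [Field R] [LinearOrder R] [IsStrictOrderedRing R] [Algebra F R]

theorem le_of_isPythagorean_of_isPGroup_gal (hF : ∀ a : F, 0 ≤ algebraMap F R a → IsSumSq a)
    {K N : IntermediateField F R} (hK : IsPythagorean K) [FiniteDimensional F N] [IsGalois F N]
    (hN : IsPGroup 2 Gal(N/F)) : N ≤ K := by
  let M : IntermediateField F N := K.comap N.val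
  suffices hM : M = ⊤ from fun z hz ↦ (hM ▸ mem_top : (⟨z, hz⟩ : N) ∈ M)
  by_contra hM
  have : CharZero M := (algebraMap M R).charZero
  obtain ⟨y, hy, c, hc⟩ := exists_sq_mem_range_of_isPGroup_gal two_ne_zero
    (hN.of_injective _ (AlgEquiv.restrictScalarsHom_injective F))
    (mt finrank_eq_one_iff_eq_top.1 hM : finrank M N ≠ 1)
  have hsplits (x : N) : ((minpoly F x).map (algebraMap F R)).Splits := by
    have := (Normal.splits' (F := F) x).map (algebraMap N R)
    rwa [Polynomial.map_map, ← IsScalarTower.algebraMap_eq] at this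
  let ι : M →+* K := ((algebraMap N R).comp (algebraMap M N)).codRestrict K fun m ↦ m.2
  obtain ⟨b, hb⟩ := hK _ (isSumSq_map ι (isSumSq_of_algebraMap_eq_sq hF hsplits hc))
  have hyb : (y : R) * y = b * b := by
    rw [← pow_two]
    exact (congrArg Subtype.val hc).symm.trans (congrArg Subtype.val hb)
  refine hy ⟨⟨y, show (y : R) ∈ K from ?_⟩, rfl⟩
  rcases mul_self_eq_mul_self_iff.1 hyb with h | h
  · exact h ▸ b.2
  · exact h ▸ neg_mem b.2

theorem rootSet_subset_of_isPythagorean (hF : ∀ a : F, 0 ≤ algebraMap F R a → IsSumSq a)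
    {K : IntermediateField F R} (hK : IsPythagorean K) {q : F[X]}
    (hsplits : (q.map (algebraMap F R)).Splits) (hq : IsPGroup 2 q.Gal) : q.rootSet R ⊆ K := by
  let N : IntermediateField F R := adjoin F (q.rootSet R)
  have : q.IsSplittingField F N := adjoin_rootSet_isSplittingField hsplits
  have : FiniteDimensional F N := IsSplittingField.finiteDimensional N q
  have : CharZero F := (algebraMap F R).charZero
  have : Normal F N := .of_isSplittingField q
  have : IsGalois F N := {}
  have hN : IsPGroup 2 Gal(N/F) := hq.of_equiv (IsSplittingField.algEquiv N q).symm.autCongr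
  exact (subset_adjoin F _).trans (le_of_isPythagorean_of_isPGroup_gal hF hK hN)

end PythagoreanExtension

/-- The elements `x` of `E` such that every `g : G` has some `g ^ p ^ n` fixing `x`. For the
absolute Galois group of a perfect field and `p` prime this is the maximal `p`-extension, described
without choosing finite subextensions. -/
def pPeriodicSubfield (p : ℕ) (G E : Type*) [Group G] [Field E] [MulSemiringAction G E] :
    Subfield E :=
  ⨅ g : G, ⨆ n : ℕ, FixedBy.subfield E (g ^ p ^ n)

theorem pow_pow_smul_eq_of_le {G X : Type*} [Group G] [MulAction G X] {p : ℕ} {g : G} {x : X}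
    {m n : ℕ} (hmn : m ≤ n) (hx : g ^ p ^ m • x = x) : g ^ p ^ n • x = x :=
  MulAction.pow_smul_eq_iff_period_dvd.2 <|
    (MulAction.pow_smul_eq_iff_period_dvd.1 hx).trans (pow_dvd_pow p hmn)

section PPeriodic

variable {p : ℕ} {G E : Type*} [Group G] [Field E] [MulSemiringAction G E] {x : E}

theorem mem_pPeriodicSubfield :
    x ∈ pPeriodicSubfield p G E ↔ ∀ g : G, ∃ n : ℕ, g ^ p ^ n • x = x := by
  have hmono (g : G) : Monotone fun n ↦ FixedBy.subfield E (g ^ p ^ n) :=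
    fun _ _ hmn _ hx ↦ pow_pow_smul_eq_of_le hmn hx
  simp only [pPeriodicSubfield, Subfield.mem_iInf,
    Subfield.mem_iSup_of_directed (hmono _).directed_le, FixedBy.subfield_mem_iff]

theorem mem_pPeriodicSubfield_of_sq_mem (hx : x ^ 2 ∈ pPeriodicSubfield 2 G E) :
    x ∈ pPeriodicSubfield 2 G E := by
  rw [mem_pPeriodicSubfield] at hx ⊢
  intro g
  obtain ⟨n, hn⟩ := hx g
  refine ⟨n + 1, ?_⟩
  rw [smul_pow', sq_eq_sq_iff_eq_or_eq_neg] at hn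
  rw [pow_succ 2, pow_mul, pow_two, mul_smul]
  rcases hn with h | h <;> simp only [h, smul_neg, neg_neg]

theorem smul_mem_pPeriodicSubfield (hx : x ∈ pPeriodicSubfield p G E) (h : G) :
    h • x ∈ pPeriodicSubfield p G E := by
  rw [mem_pPeriodicSubfield] at hx ⊢
  intro g
  obtain ⟨n, hn⟩ := hx (h⁻¹ * g * h⁻¹⁻¹)
  rw [conj_pow, inv_inv, mul_smul, mul_smul, inv_smul_eq_iff] at hn
  exact ⟨n, hn⟩

end PPeriodic

theorem isPGroup_gal_of_rootSet_subset {p : ℕ} {F E : Type*} [Field F] [Field E] [Algebra F E]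
    [Normal F E] {q : F[X]} (hsplits : (q.map (algebraMap F E)).Splits)
    (hq : q.rootSet E ⊆ pPeriodicSubfield p Gal(E/F) E) : IsPGroup p q.Gal := by
  have : Fact (q.map (algebraMap F E)).Splits := ⟨hsplits⟩
  intro τ
  obtain ⟨σ, rfl⟩ := Gal.restrict_surjective q E τ
  choose n hn using fun x : q.rootSet E ↦ mem_pPeriodicSubfield.1 (hq x.2) σ
  refine ⟨Finset.univ.sup n, Gal.galActionHom_injective q E ?_⟩
  ext x
  rw [← map_pow, Gal.galActionHom_restrict, map_one, Equiv.Perm.one_apply]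
  exact pow_pow_smul_eq_of_le (Finset.le_sup (Finset.mem_univ x)) (hn x)

theorem isPGroup_gal_minpoly {p : ℕ} {F E : Type*} [Field F] [Field E] [Algebra F E]
    [Normal F E] {x : E} (hx : x ∈ pPeriodicSubfield p Gal(E/F) E) :
    IsPGroup p (minpoly F x).Gal := by
  refine isPGroup_gal_of_rootSet_subset (Normal.splits' x) fun y hy ↦ ?_
  obtain ⟨σ, rfl⟩ := minpoly.exists_algEquiv_of_root' (Normal.isIntegral ‹_› x).isAlgebraic
    (mem_rootSet.1 hy).2
  exact smul_mem_pPeriodicSubfield hx σ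

/-- The `p`-periodic elements for the group `Gal(A/F)`, where `A` is the algebraic closure of `F`
in `L`, viewed as elements of `L`. For `F` perfect, `L` algebraically closed and `p` prime this is
the compositum of all finite Galois `p`-extensions of `F` in `L`. -/
def pClosure (p : ℕ) (F L : Type*) [Field F] [Field L] [Algebra F L] : Subfield L :=
  (pPeriodicSubfield p Gal(algebraicClosure F L/F) (algebraicClosure F L)).map
    (algebraMap (algebraicClosure F L) L)

theorem mem_pClosure_of_sq_mem {F L : Type*} [Field F] [Field L] [Algebra F L] {x : L}
    (hx : x ^ 2 ∈ pClosure 2 F L) : x ∈ pClosure 2 F L := by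
  obtain ⟨w, hw, hwx⟩ := hx
  have hx_alg : x ∈ algebraicClosure F L :=
    mem_algebraicClosure_iff.2 (.of_pow two_pos (hwx ▸ mem_algebraicClosure_iff.1 w.2))
  refine ⟨⟨x, hx_alg⟩, mem_pPeriodicSubfield_of_sq_mem ?_, rfl⟩
  rwa [show (⟨x, hx_alg⟩ : algebraicClosure F L) ^ 2 = w from Subtype.ext hwx.symm]

theorem isPGroup_gal_minpoly_of_mem_pClosure {p : ℕ} {F L : Type*} [Field F] [Field L]
    [Algebra F L] [IsAlgClosed L] {x : L} (hx : x ∈ pClosure p F L) :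
    IsPGroup p (minpoly F x).Gal := by
  obtain ⟨a, ha, rfl⟩ := hx
  exact minpoly_eq a ▸ isPGroup_gal_minpoly ha

theorem MemFSqrt.isPGroup_gal_minpoly {α : ℂ} (hα : MemFSqrt α) :
    IsPGroup 2 (minpoly ℚ α).Gal :=
  isPGroup_gal_minpoly_of_mem_pClosure (hα _ fun _ ↦ mem_pClosure_of_sq_mem)

theorem IsTotallyReal.splits_minpoly {α : ℂ} (hα : IsTotallyReal α) :
    ((minpoly ℚ α).map (algebraMap ℚ ℝ)).Splits := by
  refine .of_splits_map (algebraMap ℝ ℂ) (IsAlgClosed.splits _) fun z hz ↦ ?_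
  rw [Polynomial.map_map, ← IsScalarTower.algebraMap_eq] at hz
  have hz_root : aeval z (minpoly ℚ α) = 0 := by simpa using (mem_roots'.1 hz).2
  exact ⟨z.re, Complex.ext rfl (by simp [hα.2 z hz_root])⟩

theorem memFSqrt_totallyReal_memFSqrtOneAddSq (α : ℝ) (h : MemFSqrt (α : ℂ))
    (hTR : IsTotallyReal (α : ℂ)) : MemFSqrtOneAddSq α := by
  intro K hK
  have hminpoly : minpoly ℚ (α : ℂ) = minpoly ℚ α :=
    minpoly.algebraMap_eq (algebraMap ℝ ℂ).injective α
  have hint : IsIntegral ℚ α :=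
    (isIntegral_algebraMap_iff (algebraMap ℝ ℂ).injective).1 hTR.1.isIntegral
  let K' : IntermediateField ℚ ℝ := K.toIntermediateField fun q ↦ by simp
  refine rootSet_subset_of_isPythagorean (K := K')
    (fun q hq ↦ isSumSq_rat_of_nonneg (by simpa using hq))
    (isPythagorean_of_sqrt_one_add_sq_mem hK)
    (hminpoly ▸ hTR.splits_minpoly) (hminpoly ▸ h.isPGroup_gal_minpoly) ?_
  exact mem_rootSet.2 ⟨minpoly.ne_zero hint, minpoly.aeval ℚ α⟩
end

section
/- The real cube root of 2 does not belong to F_{√(1+x²)}; that is, there exists a subfield K of ℝ with √(1+x²) ∈ K for every x ∈ K such that 2^{1/3} ∉ K. (Hence duplication of the cube is impossible by origami.) -/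
/-!
Every element of `F_{√(1+x²)}` is totally real. Indeed, an algebraic number is totally real
exactly when every embedding of the field of algebraic numbers into `ℂ` sends it to a real number.
Such numbers form a field, and this field is closed under `x ↦ √(1+x²)` because an embedding sends
`√(1+x²)` to a square root of `1 + r²` with `r` real, and `1 + r²` is positive. On the other hand,
the minimal polynomial `X³ - 2` of `2^{1/3}` has nonreal roots.
-/

open Polynomial

open NumberField (maximalRealSubfield mem_maximalRealSubfield_iff)

section Embeddings

variable {L : Type*} [Field L]

theorem isTotallyReal_apply_iff_mem_maximalRealSubfield (τ : L →+* ℂ)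
    (hτ : ∀ x, IsAlgebraic ℚ (τ x)) {a : L} :
    IsTotallyReal (τ a) ↔ a ∈ maximalRealSubfield L := by
  have : CharZero L := τ.charZero
  have : Algebra.IsAlgebraic ℚ L :=
    ⟨fun x ↦ (isAlgebraic_algHom_iff τ.toRatAlgHom τ.injective).1 (hτ x)⟩
  have hroots (z : ℂ) : aeval z (minpoly ℚ (τ a)) = 0 ↔ ∃ σ : L →ₐ[ℚ] ℂ, σ a = z := by
    rw [← RingHom.toRatAlgHom_apply τ, minpoly.algHom_eq _ τ.toRatAlgHom.injective,
      ← Set.mem_range, Algebra.IsAlgebraic.range_eval_eq_rootSet_minpoly,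
      mem_rootSet_of_ne (minpoly.ne_zero (Algebra.IsIntegral.isIntegral a))]
  simp only [IsTotallyReal, hroots, forall_exists_index, forall_apply_eq_imp_iff,
    mem_maximalRealSubfield_iff, Complex.star_def, Complex.conj_eq_iff_im]
  exact ⟨fun h φ ↦ h.2 φ.toRatAlgHom, fun h ↦ ⟨hτ a, fun σ ↦ h σ⟩⟩

theorem mem_maximalRealSubfield_of_sq_eq_sq_add_sq {a b c : L} (ha : a ∈ maximalRealSubfield L)
    (hb : b ∈ maximalRealSubfield L) (h : c ^ 2 = a ^ 2 + b ^ 2) : c ∈ maximalRealSubfield L := by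
  intro φ
  obtain ⟨r, hr⟩ := Complex.conj_eq_iff_real.1 (ha φ)
  obtain ⟨s, hs⟩ := Complex.conj_eq_iff_real.1 (hb φ)
  have hφ : φ c ^ 2 = (√(r ^ 2 + s ^ 2) : ℂ) ^ 2 := by
    rw [← map_pow, h, ← Complex.ofReal_pow, Real.sq_sqrt (by positivity)]
    simp [hr, hs]
  rcases sq_eq_sq_iff_eq_or_eq_neg.1 hφ with hc | hc <;> simp [hc]

end Embeddings

/-- The field of totally real numbers, realized as the maximal real subfield of the field of
algebraic numbers in `ℂ`, so that the field axioms come for free; `mem_totallyRealSubfield`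
identifies its elements. -/
noncomputable def totallyRealSubfield : Subfield ℂ :=
  (maximalRealSubfield (algebraicClosure ℚ ℂ)).map (algebraMap (algebraicClosure ℚ ℂ) ℂ)

theorem mem_totallyRealSubfield {α : ℂ} : α ∈ totallyRealSubfield ↔ IsTotallyReal α := by
  have hmap {a : algebraicClosure ℚ ℂ} :
      IsTotallyReal a ↔ a ∈ maximalRealSubfield (algebraicClosure ℚ ℂ) :=
    isTotallyReal_apply_iff_mem_maximalRealSubfield (algebraMap (algebraicClosure ℚ ℂ) ℂ)
      fun x ↦ mem_algebraicClosure_iff.1 x.2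
  constructor
  · rintro ⟨a, ha, rfl⟩
    exact hmap.2 ha
  · intro hα
    exact ⟨⟨α, mem_algebraicClosure_iff.2 hα.1⟩, hmap.1 hα, rfl⟩

theorem IsTotallyReal.of_sq_eq_sq_add_sq {α β γ : ℂ} (hα : IsTotallyReal α) (hβ : IsTotallyReal β)
    (h : γ ^ 2 = α ^ 2 + β ^ 2) : IsTotallyReal γ := by
  rw [← mem_totallyRealSubfield] at hα hβ ⊢
  obtain ⟨a, ha, rfl⟩ := hα
  obtain ⟨b, hb, rfl⟩ := hβ
  have hγ : IsAlgebraic ℚ γ :=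
    .of_pow two_pos (h ▸ mem_algebraicClosure_iff.1 (a ^ 2 + b ^ 2).2)
  exact ⟨⟨γ, mem_algebraicClosure_iff.2 hγ⟩,
    mem_maximalRealSubfield_of_sq_eq_sq_add_sq ha hb (Subtype.ext h), rfl⟩

theorem MemFSqrtOneAddSq.isTotallyReal {x : ℝ} (hx : MemFSqrtOneAddSq x) :
    IsTotallyReal (x : ℂ) := by
  refine mem_totallyRealSubfield.1 (hx (totallyRealSubfield.comap Complex.ofRealHom) fun y hy ↦ ?_)
  rw [Subfield.mem_comap, mem_totallyRealSubfield] at hy ⊢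
  have hsq : (√(1 + y ^ 2) : ℂ) ^ 2 = 1 ^ 2 + (y : ℂ) ^ 2 := by
    rw [← Complex.ofReal_pow, Real.sq_sqrt (by positivity)]
    simp
  exact .of_sq_eq_sq_add_sq (mem_totallyRealSubfield.1 (one_mem _)) hy hsq

theorem im_ne_zero_of_isPrimitiveRoot {ζ : ℂ} {n : ℕ} (hζ : IsPrimitiveRoot ζ n) (hn : 2 < n) :
    ζ.im ≠ 0 := by
  intro him
  have hsq : ζ ^ 2 = 1 := by
    simpa [Complex.conj_eq_iff_im.2 him, hζ.norm'_eq_one (by lia), sq] using Complex.mul_conj' ζ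
  exact hn.not_ge (Nat.le_of_dvd two_pos (hζ.dvd_of_pow_eq_one 2 hsq))

theorem not_isTotallyReal_of_pow_eq {n : ℕ} (hn : 2 < n) {q : ℚ} (hq : Irreducible (X ^ n - C q))
    {α : ℂ} (hα : α ^ n = q) : ¬ IsTotallyReal α := by
  rintro ⟨-, hreal⟩
  have hn0 : n ≠ 0 := by lia
  have hmin : minpoly ℚ α = X ^ n - C q :=
    (minpoly.eq_of_irreducible_of_monic hq (by simp [hα]) (monic_X_pow_sub_C q hn0)).symm
  have him {z : ℂ} (hz : z ^ n = q) : z.im = 0 := hreal z (by simp [hmin, hz])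
  have hα0 : α ≠ 0 := by
    rintro rfl
    have hq0 : (0 : ℂ) = q := by simpa [hn0] using hα
    exact ne_zero_of_irreducible_X_pow_sub_C' (by lia) hq (by exact_mod_cast hq0.symm)
  have hre : α.re ≠ 0 := fun h ↦ hα0 (Complex.ext h (him hα))
  have hζ := Complex.isPrimitiveRoot_exp n hn0
  set ζ := Complex.exp (2 * Real.pi * Complex.I / n)
  have hαζ : (α * ζ).im = 0 := him (by rw [mul_pow, hα, hζ.pow_eq_one, mul_one])
  refine im_ne_zero_of_isPrimitiveRoot hζ hn ?_
  simpa [Complex.mul_im, him hα, hre] using hαζ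

section Eisenstein

variable {R : Type*} [CommRing R] [IsDomain R] {p : R} {n : ℕ}

theorem isEisensteinAt_X_pow_sub_C_of_prime (hp : Prime p) (hn : n ≠ 0) :
    (X ^ n - C p).IsEisensteinAt (Ideal.span {p}) := by
  refine (monic_X_pow_sub_C p hn).isEisensteinAt_of_mem_of_notMem ?_ (fun {i} hi ↦ ?_) ?_
  · simpa using hp.not_isUnit
  · rw [natDegree_X_pow_sub_C] at hi
    rcases eq_or_ne i 0 with rfl | hi0 <;> simp [coeff_X_pow, coeff_C, hi.ne, *]
  · have hsq : ¬ p ^ 2 ∣ p := fun h ↦ hp.not_isUnit (hp.irreducible.squarefree p (sq p ▸ h))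
    simpa [Ideal.span_singleton_pow, Ideal.mem_span_singleton, hn.symm, coeff_X_pow]

theorem irreducible_X_pow_sub_C_of_prime (hp : Prime p) (hn : n ≠ 0) :
    Irreducible (X ^ n - C p) :=
  (isEisensteinAt_X_pow_sub_C_of_prime hp hn).irreducible
    ((Ideal.span_singleton_prime hp.ne_zero).2 hp) (monic_X_pow_sub_C p hn).isPrimitive
    (by simpa using hn.pos)

theorem irreducible_X_pow_sub_C_algebraMap_of_prime [IsIntegrallyClosed R] (K : Type*) [Field K]
    [Algebra R K] [IsFractionRing R K] (hp : Prime p) (hn : n ≠ 0) :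
    Irreducible (X ^ n - C (algebraMap R K p)) := by
  simpa using (monic_X_pow_sub_C p hn).irreducible_iff_irreducible_map_fraction_map (K := K).1
    (irreducible_X_pow_sub_C_of_prime hp hn)

end Eisenstein

theorem cbrt_two_not_memFSqrtOneAddSq_general {n : ℕ} (hn : 2 < n) {q : ℚ}
    (hq : Irreducible (X ^ n - C q)) {x : ℝ} (hx : x ^ n = q) : ¬ MemFSqrtOneAddSq x :=
  fun h ↦ not_isTotallyReal_of_pow_eq hn hq (by exact_mod_cast hx) h.isTotallyReal

theorem cbrt_two_not_memFSqrtOneAddSq :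
    ∃ K : Subfield ℝ, (∀ x ∈ K, Real.sqrt (1 + x ^ 2) ∈ K) ∧
      ((2 : ℝ) ^ ((1 : ℝ) / 3) : ℝ) ∉ K := by
  have hirr : Irreducible (X ^ 3 - C 2 : ℚ[X]) := by
    simpa using irreducible_X_pow_sub_C_algebraMap_of_prime ℚ Int.prime_two three_ne_zero
  have hcube : ((2 : ℝ) ^ ((1 : ℝ) / 3)) ^ 3 = (2 : ℚ) := by
    simpa using Real.rpow_inv_natCast_pow (zero_le_two (α := ℝ)) three_ne_zero
  simpa only [MemFSqrtOneAddSq, not_forall, exists_prop] using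
    cbrt_two_not_memFSqrtOneAddSq_general (by norm_num) hirr hcube
end
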